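/- Let C_{GN,2d} := inf{ ‖u‖_{L²(ℝ²)}² ‖∇u‖_{L²(ℝ²)}² / ‖u‖_{L⁴(ℝ²)}⁴ : u ∈ H¹(ℝ²), u ≠ 0 }. There exists a constant c > 0 such that for every u ∈ H¹(ℝ²×𝕋): ‖u‖_{L⁴(ℝ²×𝕋)} ≤ ‖∇ₓu‖_{L²(ℝ²×𝕋)}^{1/2} · ( (2π C_{GN,2d})^{-1/4} ‖u‖_{L²(ℝ²×𝕋)}^{1/2} + c · ‖u‖_{L²(ℝ²×𝕋)}^{1/4} ‖∂ᵧu‖_{L²(ℝ²×𝕋)}^{1/4} ). -/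

import Mathlib

open MeasureTheory Real
open scoped ENNReal

noncomputable section

/-- The underlying Euclidean space `ℝ²`. -/
abbrev R2 : Type := EuclideanSpace ℝ (Fin 2)

/-- The measure on `ℝ² × 𝕋`: the product of Lebesgue measure on `ℝ²` with Lebesgue
measure on a period interval `(0, 2π]` (realising `𝕋 = ℝ/(2πℤ)` with total mass `2π`). -/
def μT : Measure (R2 × ℝ) :=
  (volume : Measure R2).prod ((volume : Measure ℝ).restrict (Set.Ioc 0 (2 * π)))

/-- The pointwise norm of the gradient in the `ℝ²`-variable, `‖∇ₓu(x,y)‖`. -/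
def gradxNorm (u : R2 × ℝ → ℂ) (p : R2 × ℝ) : ℝ :=
  ‖fderiv ℝ (fun x : R2 => u (x, p.2)) p.1‖

/-- The derivative in the `𝕋`-variable, `∂ᵧu(x,y)`. -/
def dyDeriv (u : R2 × ℝ → ℂ) (p : R2 × ℝ) : ℂ :=
  deriv (fun y : ℝ => u (p.1, y)) p.2

/-- `u ∈ H¹(ℝ²×𝕋)`: `u` is differentiable, `2π`-periodic in the second variable, and
`u, ∇ₓu, ∂ᵧu ∈ L²(ℝ²×𝕋)`. -/
def IsH1T (u : R2 × ℝ → ℂ) : Prop :=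
  Differentiable ℝ u ∧ (∀ (x : R2) (y : ℝ), u (x, y + 2 * π) = u (x, y)) ∧
    MemLp u 2 μT ∧ MemLp (gradxNorm u) 2 μT ∧ MemLp (dyDeriv u) 2 μT

/-- The mean in the `𝕋`-variable, `m(u)(x,y) = (2π)⁻¹ ∫_𝕋 u(x,y') dy'`. -/
def ymean (u : R2 × ℝ → ℂ) (p : R2 × ℝ) : ℂ :=
  (2 * π : ℝ)⁻¹ • ∫ y in (0 : ℝ)..(2 * π), u (p.1, y)

/-- The pointwise norm of the gradient of `u : ℝ² → ℂ`. -/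
def gradNorm (u : R2 → ℂ) (x : R2) : ℝ := ‖fderiv ℝ u x‖

/-- `u ∈ H¹(ℝ²)`: `u` is differentiable, `u ∈ L²(ℝ²)` and `∇u ∈ L²(ℝ²)`. -/
def IsH1 (u : R2 → ℂ) : Prop :=
  Differentiable ℝ u ∧ MemLp u 2 volume ∧ MemLp (gradNorm u) 2 volume

/-- The sharp 2D Gagliardo–Nirenberg (Weinstein) constant
`C_{GN,2d} = inf ‖u‖₂²‖∇u‖₂² / ‖u‖₄⁴` over nonzero `u ∈ H¹(ℝ²)`. -/
def CGN2d : ℝ≥0∞ :=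
  ⨅ u ∈ {u : R2 → ℂ | IsH1 u ∧ ¬ u =ᵐ[volume] (0 : R2 → ℂ)},
    eLpNorm u 2 volume ^ (2 : ℕ) * eLpNorm (gradNorm u) 2 volume ^ (2 : ℕ) /
      eLpNorm u 4 volume ^ (4 : ℕ)

lemma aux_eLp2 {α : Type*} {E : Type*} [NormedAddCommGroup E] [MeasurableSpace α]
    (μ : Measure α) (f : α → E) :
    eLpNorm f 2 μ ^ (2 : ℕ) = ∫⁻ x, ‖f x‖ₑ ^ (2 : ℕ) ∂μ := by
  have h := eLpNorm_nnreal_pow_eq_lintegral (f := f) (μ := μ) (p := 2) (by norm_num)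
  norm_num at h
  exact h

lemma aux_eLp4 {α : Type*} {E : Type*} [NormedAddCommGroup E] [MeasurableSpace α]
    (μ : Measure α) (f : α → E) :
    eLpNorm f 4 μ ^ (4 : ℕ) = ∫⁻ x, ‖f x‖ₑ ^ (4 : ℕ) ∂μ := by
  have h := eLpNorm_nnreal_pow_eq_lintegral (f := f) (μ := μ) (p := 4) (by norm_num)
  norm_num at h
  exact h

lemma aux_memLp2 {α : Type*} {E : Type*} [NormedAddCommGroup E] [MeasurableSpace α]
    {μ : Measure α} {f : α → E} (hf : AEStronglyMeasurable f μ)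
    (h : ∫⁻ x, ‖f x‖ₑ ^ (2 : ℕ) ∂μ < ⊤) : MemLp f 2 μ := by
  refine ⟨hf, ?_⟩
  rw [← aux_eLp2] at h
  by_contra hc
  simp only [not_lt, top_le_iff] at hc
  simp [hc] at h

lemma aux_slice (f : ℝ → ℂ) (hf : Differentiable ℝ f) {y y' : ℝ}
    (hy : y ∈ Set.Ioc 0 (2 * π)) (hy' : y' ∈ Set.Ioc 0 (2 * π)) :
    ‖f y‖ₑ ^ (2 : ℕ) ≤ ‖f y'‖ₑ ^ (2 : ℕ) +
      ∫⁻ t in Set.Ioc 0 (2 * π), 2 * (‖f t‖ₑ * ‖deriv f t‖ₑ) := by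
  by_cases htop : ∫⁻ t in Set.Ioc 0 (2 * π), 2 * (‖f t‖ₑ * ‖deriv f t‖ₑ) = ⊤
  · simp [htop]
  set g : ℝ → ℝ := fun t => 2 * inner ℝ (f t) (deriv f t) with hg
  have hgm : Measurable g :=
    (hf.continuous.measurable.inner (measurable_deriv f)).const_mul 2
  have hgle : ∀ t, ‖g t‖ₑ ≤ 2 * (‖f t‖ₑ * ‖deriv f t‖ₑ) := by
    intro t
    have h1 : ‖g t‖ ≤ 2 * (‖f t‖ * ‖deriv f t‖) := by
      rw [hg]
      simp only [norm_mul, Real.norm_ofNat]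
      gcongr
      exact norm_inner_le_norm _ _
    have h2 := ENNReal.ofReal_le_ofReal h1
    rw [ENNReal.ofReal_mul (by norm_num), ENNReal.ofReal_mul (norm_nonneg _)] at h2
    rw [ofReal_norm, ofReal_norm, ofReal_norm] at h2
    simpa using h2
  have hint : IntegrableOn g (Set.Ioc 0 (2 * π)) := by
    refine ⟨hgm.aestronglyMeasurable, ?_⟩
    exact (lintegral_mono hgle).trans_lt (lt_top_iff_ne_top.2 htop)
  have hsub : Set.uIoc y' y ⊆ Set.Ioc 0 (2 * π) := by
    intro t ht
    rw [Set.mem_uIoc] at ht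
    rcases ht with ht | ht
    · exact ⟨hy'.1.trans ht.1, ht.2.trans hy.2⟩
    · exact ⟨hy.1.trans ht.1, ht.2.trans hy'.2⟩
  have hii : IntervalIntegrable g volume y' y := by
    rw [intervalIntegrable_iff]
    exact hint.mono_set hsub
  have hftc := intervalIntegral.integral_eq_sub_of_hasDerivAt
    (f := fun t => ‖f t‖ ^ 2) (f' := g) (a := y') (b := y)
    (fun t _ => (hf t).hasDerivAt.norm_sq) hii
  have hb : ‖(∫ t in y'..y, g t)‖ₑ ≤ ∫⁻ t in Set.Ioc 0 (2 * π), 2 * (‖f t‖ₑ * ‖deriv f t‖ₑ) := by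
    have e : ‖(∫ t in y'..y, g t)‖ₑ = ‖(∫ t in Set.uIoc y' y, g t)‖ₑ := by
      rw [← ofReal_norm, intervalIntegral.norm_integral_eq_norm_integral_uIoc,
        ofReal_norm]
    rw [e]
    refine (enorm_integral_le_lintegral_enorm _).trans ?_
    exact (lintegral_mono hgle).trans (lintegral_mono_set hsub)
  have e2 : ∀ z : ℂ, ‖z‖ₑ ^ (2 : ℕ) = ENNReal.ofReal (‖z‖ ^ 2) := by
    intro z
    rw [ENNReal.ofReal_pow (norm_nonneg _), ofReal_norm]
  refine le_trans ?_ (add_le_add_right hb _)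
  rw [e2, e2, ← ofReal_norm, ← ENNReal.ofReal_add (by positivity) (by positivity), hftc]
  apply ENNReal.ofReal_le_ofReal
  have := le_abs_self (‖f y‖ ^ 2 - ‖f y'‖ ^ 2)
  rw [Real.norm_eq_abs]
  linarith

lemma aux_sup (u : R2 × ℝ → ℂ) (hu : Differentiable ℝ u) {y : ℝ}
    (hy : y ∈ Set.Ioc 0 (2 * π)) :
    ENNReal.ofReal (2 * π) * ∫⁻ x : R2, ‖u (x, y)‖ₑ ^ (2 : ℕ) ≤
      eLpNorm u 2 μT ^ (2 : ℕ) +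
        ENNReal.ofReal (2 * π) * (2 * (eLpNorm u 2 μT * eLpNorm (dyDeriv u) 2 μT)) := by
  have hum : Measurable u := hu.continuous.measurable
  have hdm : Measurable (dyDeriv u) := by
    have := measurable_deriv_with_param (𝕜 := ℝ) (f := fun (x : R2) (t : ℝ) => u (x, t))
      (show Continuous u from hu.continuous)
    exact this
  have hH : ∫⁻ p, ‖u p‖ₑ * ‖dyDeriv u p‖ₑ ∂μT ≤ eLpNorm u 2 μT * eLpNorm (dyDeriv u) 2 μT := by
    have := ENNReal.lintegral_mul_le_Lp_mul_Lq μT Real.HolderConjugate.two_two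
      (f := fun p => ‖u p‖ₑ) (g := fun p => ‖dyDeriv u p‖ₑ) hum.enorm.aemeasurable
      hdm.enorm.aemeasurable
    rw [eLpNorm_eq_lintegral_rpow_enorm_toReal (by norm_num) (by norm_num),
      eLpNorm_eq_lintegral_rpow_enorm_toReal (by norm_num) (by norm_num)]
    simpa using this
  have hpt : ∀ x : R2, ENNReal.ofReal (2 * π) * ‖u (x, y)‖ₑ ^ (2 : ℕ) ≤
      (∫⁻ t in Set.Ioc 0 (2 * π), ‖u (x, t)‖ₑ ^ (2 : ℕ)) +
      ENNReal.ofReal (2 * π) * ∫⁻ t in Set.Ioc 0 (2 * π),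
        2 * (‖u (x, t)‖ₑ * ‖dyDeriv u (x, t)‖ₑ) := by
    intro x
    have hfd : Differentiable ℝ (fun t : ℝ => u (x, t)) := by fun_prop
    have h := setLIntegral_mono' (μ := volume) (measurableSet_Ioc (a := (0:ℝ)) (b := 2 * π))
      (fun y' hy' => aux_slice _ hfd hy hy')
    rw [lintegral_add_right _ measurable_const, setLIntegral_const, setLIntegral_const] at h
    simp only [Real.volume_Ioc, sub_zero] at h
    rw [mul_comm]
    refine h.trans (le_of_eq ?_)
    rw [mul_comm (ENNReal.ofReal _)]
    rfl
  rw [← lintegral_const_mul _ (by fun_prop)]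
  refine (lintegral_mono hpt).trans ?_
  rw [lintegral_add_left (by
      exact Measurable.lintegral_prod_right' (f := fun p : R2 × ℝ => ‖u p‖ₑ ^ (2 : ℕ)) (by fun_prop)),
    lintegral_const_mul _ (by
      exact Measurable.lintegral_prod_right'
        (f := fun p : R2 × ℝ => 2 * (‖u p‖ₑ * ‖dyDeriv u p‖ₑ)) (by fun_prop)),
    aux_eLp2, μT, 
    ← lintegral_prod (fun p : R2 × ℝ => ‖u p‖ₑ ^ (2 : ℕ)) (by fun_prop),
    ← lintegral_prod (fun p : R2 × ℝ => 2 * (‖u p‖ₑ * ‖dyDeriv u p‖ₑ)) (by fun_prop),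
    lintegral_const_mul _ (by fun_prop)]
  gcongr
  exact hH

lemma aux_const (v : R2 → ℂ) (hv : Differentiable ℝ v) (h2 : MemLp v 2 volume)
    (hd : ∀ᵐ x : R2, fderiv ℝ v x = 0) : v = 0 := by
  have hinv : ∀ e : R2, (fun x => v (x + e)) = v := by
    intro e
    rw [← Continuous.ae_eq_iff_eq (volume : Measure R2) (by
      have := hv.continuous
      fun_prop) hv.continuous]
    have hms : MeasurableSet {p : R2 × ℝ | fderiv ℝ v (p.1 + p.2 • e) = 0} := by
      have : Measurable (fun p : R2 × ℝ => fderiv ℝ v (p.1 + p.2 • e)) :=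
        (measurable_fderiv ℝ v).comp (by fun_prop)
      exact this (measurableSet_singleton 0)
    have hae : ∀ᵐ x : R2, ∀ᵐ s : ℝ, fderiv ℝ v (x + s • e) = 0 := by
      rw [Measure.ae_ae_comm hms]
      refine Filter.Eventually.of_forall fun s => ?_
      exact (measurePreserving_add_right (volume : Measure R2) (s • e)).quasiMeasurePreserving.ae hd
    filter_upwards [hae] with x hx
    have hder : ∀ s : ℝ, HasDerivAt (fun s : ℝ => v (x + s • e)) (fderiv ℝ v (x + s • e) e) s := by
      intro s
      have h1 : HasDerivAt (fun s : ℝ => x + s • e) e s := by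
        simpa using ((hasDerivAt_id s).smul_const e).const_add x
      exact (hv (x + s • e)).hasFDerivAt.comp_hasDerivAt s h1
    have hz : (fun s : ℝ => fderiv ℝ v (x + s • e) e) =ᵐ[volume] fun _ => (0 : ℂ) := by
      filter_upwards [hx] with s hs
      simp [hs]
    have hi : IntervalIntegrable (fun s : ℝ => fderiv ℝ v (x + s • e) e) volume 0 1 := by
      have h0 : IntervalIntegrable (fun _ : ℝ => (0 : ℂ)) volume 0 1 := by simp
      exact h0.congr_ae (Filter.EventuallyEq.symm (ae_restrict_of_ae hz))
    have := intervalIntegral.integral_eq_sub_of_hasDerivAt (a := 0) (b := 1)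
      (fun s _ => hder s) hi
    rw [intervalIntegral.integral_congr_ae (g := fun _ => (0 : ℂ))
      (by filter_upwards [hz] with s hs _ using hs)] at this
    simp at this
    exact (sub_eq_zero.1 this.symm)
  have hc : v = fun _ => v 0 := by
    funext x
    have := congrFun (hinv x) 0
    simpa using this
  rw [hc, memLp_const_iff (by norm_num) (by norm_num)] at h2
  rcases h2 with h | h
  · rw [hc, h]; rfl
  · simp at h

lemma aux_GN (v : R2 → ℂ) (hv : IsH1 v) (hC : CGN2d ≠ 0) :
    ∫⁻ x, ‖v x‖ₑ ^ (4 : ℕ) ≤ CGN2d⁻¹ * ((∫⁻ x, ‖v x‖ₑ ^ (2 : ℕ)) *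
      ∫⁻ x, ‖gradNorm v x‖ₑ ^ (2 : ℕ)) := by
  by_cases h0 : v =ᵐ[volume] (0 : R2 → ℂ)
  · have : ∫⁻ x, ‖v x‖ₑ ^ (4 : ℕ) = 0 := by
      rw [← aux_eLp4, eLpNorm_congr_ae h0]
      simp
    simp [this]
  · have h1 : CGN2d ≤ eLpNorm v 2 volume ^ (2 : ℕ) * eLpNorm (gradNorm v) 2 volume ^ (2 : ℕ) /
      eLpNorm v 4 volume ^ (4 : ℕ) := iInf₂_le v ⟨hv, h0⟩
    have h2 := ENNReal.mul_le_of_le_div h1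
    rw [aux_eLp2, aux_eLp2, aux_eLp4] at h2
    rw [mul_comm CGN2d⁻¹, ← div_eq_mul_inv]
    have hne : CGN2d ≠ ⊤ := by
      refine ne_top_of_le_ne_top ?_ h1
      refine (ENNReal.div_lt_top ?_ ?_).ne
      · exact ENNReal.mul_ne_top (ENNReal.pow_ne_top hv.2.1.2.ne) (ENNReal.pow_ne_top hv.2.2.2.ne)
      · intro h
        apply h0
        rw [pow_eq_zero_iff (by norm_num)] at h
        exact (eLpNorm_eq_zero_iff hv.2.1.1 (by norm_num)).1 h
    rw [ENNReal.le_div_iff_mul_le (Or.inl hC) (Or.inl hne)]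
    rw [mul_comm]
    exact h2

lemma aux_sliceH1 (u : R2 × ℝ → ℂ) (hu : IsH1T u) :
    ∀ᵐ y ∂(volume.restrict (Set.Ioc 0 (2 * π))), IsH1 (fun x => u (x, y)) := by
  obtain ⟨hd, -, h2, hg, -⟩ := hu
  have hcont := hd.continuous
  have a1 : ∀ᵐ y ∂(volume.restrict (Set.Ioc 0 (2 * π))), ∫⁻ x : R2, ‖u (x, y)‖ₑ ^ (2 : ℕ) < ⊤ := by
    apply ae_lt_top'
    · exact AEMeasurable.lintegral_prod_left' (μ := volume) (f := fun p : R2 × ℝ => ‖u p‖ₑ ^ (2 : ℕ)) (h2.1.enorm.pow_const 2)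
    · rw [← lintegral_prod_symm (μ := volume) (fun p : R2 × ℝ => ‖u p‖ₑ ^ (2 : ℕ)) (h2.1.enorm.pow_const 2)]
      have := aux_eLp2 μT u
      rw [μT] at this
      rw [← this]
      exact ENNReal.pow_ne_top h2.2.ne
  have a2 : ∀ᵐ y ∂(volume.restrict (Set.Ioc 0 (2 * π))),
      ∫⁻ x : R2, ‖gradxNorm u (x, y)‖ₑ ^ (2 : ℕ) < ⊤ := by
    apply ae_lt_top'
    · exact AEMeasurable.lintegral_prod_left' (μ := volume) (f := fun p : R2 × ℝ => ‖gradxNorm u p‖ₑ ^ (2 : ℕ)) (hg.1.enorm.pow_const 2)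
    · rw [← lintegral_prod_symm (μ := volume) (fun p : R2 × ℝ => ‖gradxNorm u p‖ₑ ^ (2 : ℕ)) (hg.1.enorm.pow_const 2)]
      have := aux_eLp2 μT (gradxNorm u)
      rw [μT] at this
      rw [← this]
      exact ENNReal.pow_ne_top hg.2.ne
  filter_upwards [a1, a2] with y h1 h2
  refine ⟨by fun_prop, aux_memLp2 ?_ h1, aux_memLp2 ?_ h2⟩
  · exact Continuous.aestronglyMeasurable (by fun_prop)
  · exact (measurable_fderiv ℝ _).norm.aestronglyMeasurable

lemma aux_zero (u : R2 × ℝ → ℂ) (hu : IsH1T u) (h0 : eLpNorm (gradxNorm u) 2 μT = 0) :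
    eLpNorm u 4 μT = 0 := by
  have hs := aux_sliceH1 u hu
  obtain ⟨hd, -, h2, hg, -⟩ := hu
  have h1 : ∫⁻ p, ‖gradxNorm u p‖ₑ ^ (2 : ℕ) ∂μT = 0 := by rw [← aux_eLp2, h0]; simp
  rw [μT, lintegral_prod_symm _ (hg.1.enorm.pow_const 2), lintegral_eq_zero_iff'
    (AEMeasurable.lintegral_prod_left' (μ := volume) (f := fun p : R2 × ℝ => ‖gradxNorm u p‖ₑ ^ (2 : ℕ)) (hg.1.enorm.pow_const 2))] at h1
  have h4 : ∫⁻ p, ‖u p‖ₑ ^ (4 : ℕ) ∂μT = 0 := by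
    rw [μT, lintegral_prod_symm _ (h2.1.enorm.pow_const 4), lintegral_eq_zero_iff'
      (AEMeasurable.lintegral_prod_left' (μ := volume) (f := fun p : R2 × ℝ => ‖u p‖ₑ ^ (4 : ℕ)) (h2.1.enorm.pow_const 4))]
    filter_upwards [h1, hs] with y hy hsy
    have hm : Measurable fun x : R2 => ‖gradxNorm u (x, y)‖ₑ ^ (2 : ℕ) :=
      (measurable_fderiv ℝ (fun x : R2 => u (x, y))).norm.enorm.pow_const 2
    have hy' : ∫⁻ x : R2, ‖gradxNorm u (x, y)‖ₑ ^ (2 : ℕ) = 0 := hy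
    rw [lintegral_eq_zero_iff hm] at hy'
    have hz : (fun x : R2 => u (x, y)) = 0 := by
      refine aux_const _ hsy.1 hsy.2.1 ?_
      filter_upwards [hy'] with x hx
      have hx' : ‖gradxNorm u (x, y)‖ₑ ^ (2 : ℕ) = 0 := hx
      rw [pow_eq_zero_iff (by norm_num), enorm_eq_zero] at hx'
      exact norm_eq_zero.1 hx'
    have : ∀ x, u (x, y) = 0 := congrFun hz
    simp [this]
  rw [← aux_eLp4] at h4
  exact (pow_eq_zero_iff (by norm_num)).1 h4

lemma aux_main (u : R2 × ℝ → ℂ) (hu : IsH1T u) (hC : CGN2d ≠ 0) :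
    eLpNorm u 4 μT ^ (4 : ℕ) ≤ eLpNorm (gradxNorm u) 2 μT ^ (2 : ℕ) *
      ((ENNReal.ofReal (2 * π) * CGN2d)⁻¹ * eLpNorm u 2 μT ^ (2 : ℕ) +
        2 * CGN2d⁻¹ * (eLpNorm u 2 μT * eLpNorm (dyDeriv u) 2 μT)) := by
  have hs := aux_sliceH1 u hu
  obtain ⟨hd, -, h2, hg, -⟩ := hu
  have hp0 : ENNReal.ofReal (2 * π) ≠ 0 := by
    have := Real.pi_pos
    simp [this]
  set A := (ENNReal.ofReal (2 * π) * CGN2d)⁻¹ * eLpNorm u 2 μT ^ (2 : ℕ) +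
        2 * CGN2d⁻¹ * (eLpNorm u 2 μT * eLpNorm (dyDeriv u) 2 μT) with hA
  have key : ∀ y ∈ Set.Ioc 0 (2 * π), CGN2d⁻¹ * ∫⁻ x : R2, ‖u (x, y)‖ₑ ^ (2 : ℕ) ≤ A := by
    intro y hy
    have h := aux_sup u hd hy
    have h' := mul_le_mul_right h (ENNReal.ofReal (2 * π) * CGN2d)⁻¹
    rw [ENNReal.mul_inv (Or.inl hp0) (Or.inl ENNReal.ofReal_ne_top)] at h' hA
    have e : (ENNReal.ofReal (2 * π))⁻¹ * ENNReal.ofReal (2 * π) = 1 :=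
      ENNReal.inv_mul_cancel hp0 ENNReal.ofReal_ne_top
    calc CGN2d⁻¹ * ∫⁻ x : R2, ‖u (x, y)‖ₑ ^ (2 : ℕ)
        = ((ENNReal.ofReal (2 * π))⁻¹ * ENNReal.ofReal (2 * π)) * (CGN2d⁻¹ * ∫⁻ x : R2, ‖u (x, y)‖ₑ ^ (2 : ℕ)) := by
          rw [e, one_mul]
      _ = _ := by ring
      _ ≤ _ := h'
      _ = (ENNReal.ofReal (2 * π))⁻¹ * CGN2d⁻¹ * eLpNorm u 2 μT ^ (2 : ℕ) +
        ((ENNReal.ofReal (2 * π))⁻¹ * ENNReal.ofReal (2 * π)) *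
          (2 * CGN2d⁻¹ * (eLpNorm u 2 μT * eLpNorm (dyDeriv u) 2 μT)) := by ring
      _ = A := by rw [e, one_mul, hA]
  rw [aux_eLp4, aux_eLp2 μT (gradxNorm u), μT, lintegral_prod_symm _ (h2.1.enorm.pow_const 4),
    lintegral_prod_symm _ (hg.1.enorm.pow_const 2), ← lintegral_mul_const'' _
    (AEMeasurable.lintegral_prod_left' (μ := volume) (f := fun p : R2 × ℝ => ‖gradxNorm u p‖ₑ ^ (2 : ℕ)) (hg.1.enorm.pow_const 2))]
  apply lintegral_mono_ae
  filter_upwards [hs, ae_restrict_mem measurableSet_Ioc] with y hy hyI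
  refine (aux_GN _ hy hC).trans ?_
  rw [← mul_assoc, mul_comm]
  exact mul_le_mul_right (key y hyI) _

/-- Proposition 1.4 (additive Gagliardo–Nirenberg inequality on `ℝ²×𝕋`): there exists a
constant `c > 0` such that for every `u ∈ H¹(ℝ²×𝕋)`,
`‖u‖_{L⁴} ≤ ‖∇ₓu‖_{L²}^{1/2} ((2π C_{GN,2d})^{-1/4} ‖u‖_{L²}^{1/2}
  + c ‖u‖_{L²}^{1/4} ‖∂ᵧu‖_{L²}^{1/4})`. -/
theorem gagliardo_nirenberg_R2xT :
    ∃ c : NNReal, 0 < c ∧ ∀ u : R2 × ℝ → ℂ, IsH1T u →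
      eLpNorm u 4 μT ≤
        eLpNorm (gradxNorm u) 2 μT ^ ((1 : ℝ) / 2) *
          ((ENNReal.ofReal (2 * π) * CGN2d) ^ (-(1 : ℝ) / 4) * eLpNorm u 2 μT ^ ((1 : ℝ) / 2) +
            (c : ℝ≥0∞) * eLpNorm u 2 μT ^ ((1 : ℝ) / 4) *
              eLpNorm (dyDeriv u) 2 μT ^ ((1 : ℝ) / 4)) := by
  by_cases hC : CGN2d = 0
  · refine ⟨1, one_pos, fun u hu => ?_⟩
    by_cases hg : eLpNorm (gradxNorm u) 2 μT = 0
    · simp [aux_zero u hu hg]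
    by_cases h2 : eLpNorm u 2 μT = 0
    · have : eLpNorm u 4 μT = 0 := by
        rw [eLpNorm_eq_zero_iff hu.2.2.1.1 (by norm_num)] at h2 ⊢
        exact h2
      simp [this]
    · rw [hC, mul_zero, ENNReal.zero_rpow_of_neg (by norm_num), ENNReal.top_mul, top_add,
        ENNReal.mul_top]
      · exact le_top
      · simp [hg]
      · simp [h2]
  · set k : ℝ≥0∞ := (2 * CGN2d⁻¹) ^ ((1 : ℝ) / 4) with hk
    have hkt : k ≠ ⊤ := by
      apply ENNReal.rpow_ne_top_of_nonneg (by norm_num)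
      exact ENNReal.mul_ne_top (by norm_num) (by simp [hC])
    refine ⟨k.toNNReal + 1, by positivity, fun u hu => ?_⟩
    have h := aux_main u hu hC
    have h' := ENNReal.rpow_le_rpow h (z := (1 : ℝ) / 4) (by norm_num)
    have e4 : ∀ a : ℝ≥0∞, (a ^ (4 : ℕ)) ^ ((1 : ℝ) / 4) = a := by
      intro a
      rw [← ENNReal.rpow_natCast, ← ENNReal.rpow_mul]; norm_num
    have e2 : ∀ a : ℝ≥0∞, (a ^ (2 : ℕ)) ^ ((1 : ℝ) / 4) = a ^ ((1 : ℝ) / 2) := by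
      intro a
      rw [← ENNReal.rpow_natCast, ← ENNReal.rpow_mul]; norm_num
    have q : (0 : ℝ) ≤ 1 / 4 := by norm_num
    rw [e4, ENNReal.mul_rpow_of_nonneg _ _ q, e2] at h'
    refine h'.trans ?_
    gcongr
    refine (ENNReal.rpow_add_le_add_rpow _ _ q (by norm_num)).trans ?_
    rw [ENNReal.mul_rpow_of_nonneg _ _ q, e2, ENNReal.mul_rpow_of_nonneg (2 * CGN2d⁻¹) _ q,
      ENNReal.mul_rpow_of_nonneg (eLpNorm u 2 μT) _ q, ← hk, ENNReal.inv_rpow, ← ENNReal.rpow_neg, ← neg_div,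
      ← mul_assoc]
    gcongr
    push_cast
    rw [ENNReal.coe_toNNReal hkt]
    exact le_self_add

end
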